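/- Let s and e be composable labelled transition systems with s eco e, and let q_s ∈ Q_s, q_e ∈ Q_e. Then there exists (X_s, X_e) ∈ R_U(s,e) with q_s ∈ X_s and q_e ∈ X_e if and only if there exists σ ∈ Utraces(s ∥ e) with s ∥ e ==σ==> q_s ∥ q_e. -/

import Mathlib

/-- Labels extended with the quiescence label `δ`. -/
inductive ELabel (Lab : Type) : Type
  | lab : Lab → ELabel Lab
  | delta : ELabel Lab

namespace ELabel

/-- Membership of an extended label in `𝓛^δ = 𝓛 ∪ {δ}`. -/
def inL {Lab : Type} (Ls : Set Lab) : ELabel Lab → Prop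
  | lab ℓ => ℓ ∈ Ls
  | delta => True

end ELabel

/-- A trace lies in `(𝓛^δ)*`. -/
def TraceIn {Lab : Type} (Ls : Set Lab) (σ : List (ELabel Lab)) : Prop :=
  ∀ x ∈ σ, ELabel.inL Ls x

/-- A labelled transition system.  `T q none q'` is an internal `τ`-step,
`T q (some ℓ) q'` is a step labelled `ℓ`. -/
structure LTS (Q : Type) (Lab : Type) where
  I : Set Lab
  U : Set Lab
  T : Q → Option Lab → Q → Prop
  q0 : Q

namespace LTS

variable {Q Lab : Type}

/-- The label set `L = I ∪ U`. -/
def L (M : LTS Q Lab) : Set Lab := M.I ∪ M.U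

/-- Standing assumptions on all LTSs: countable, disjoint input/output label
sets, transitions labelled within `L`, strong convergence (no infinite
`τ`-sequences), and image-finiteness. -/
def WellFormed (M : LTS Q Lab) : Prop :=
  M.I.Countable ∧ M.U.Countable ∧ Disjoint M.I M.U ∧
  (∀ q ℓ q', M.T q (some ℓ) q' → ℓ ∈ M.L) ∧
  (¬ ∃ f : ℕ → Q, ∀ n, M.T (f n) none (f (n + 1))) ∧
  (∀ q a, {q' | M.T q a q'}.Finite)

/-- A state is quiescent if neither an output nor `τ` is enabled in it. -/
def Quiescent (M : LTS Q Lab) (q : Q) : Prop :=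
  (∀ x ∈ M.U, ∀ q', ¬ M.T q (some x) q') ∧ ∀ q', ¬ M.T q none q'

/-- A single visible step `q --x--> q'` for `x ∈ L^δ`, where the quiescence
label `δ` gives a self-loop at quiescent states. -/
def VStep (M : LTS Q Lab) (q : Q) : ELabel Lab → Q → Prop
  | .lab ℓ, q' => M.T q (some ℓ) q'
  | .delta, q' => q' = q ∧ M.Quiescent q

/-- Zero or more `τ`-steps: `q ==ε==> q'`. -/
def Eps (M : LTS Q Lab) : Q → Q → Prop :=
  Relation.ReflTransGen fun a b => M.T a none b

/-- Weak transition `q ==σ==> q'` for `σ ∈ (L^δ)*`. -/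
inductive W (M : LTS Q Lab) : Q → List (ELabel Lab) → Q → Prop
  | nil {q q' : Q} : M.Eps q q' → W M q [] q'
  | snoc {q q1 q2 q' : Q} {σ : List (ELabel Lab)} {x : ELabel Lab} :
      W M q σ q1 → M.VStep q1 x q2 → M.Eps q2 q' → W M q (σ ++ [x]) q'

/-- `X after σ`, for a set of states `X`. -/
def afterSet (M : LTS Q Lab) (X : Set Q) (σ : List (ELabel Lab)) : Set Q :=
  {q' | ∃ q ∈ X, M.W q σ q'}

/-- `M after σ`, from the initial state. -/
def after (M : LTS Q Lab) (σ : List (ELabel Lab)) : Set Q :=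
  {q' | M.W M.q0 σ q'}

/-- The predicate underlying `out(q) ⊆ U ∪ {δ}`. -/
def outLabel (M : LTS Q Lab) (q : Q) : ELabel Lab → Prop
  | .lab ℓ => ℓ ∈ M.U ∧ ∃ q', M.T q (some ℓ) q'
  | .delta => M.Quiescent q

/-- `out(q)`. -/
def outq (M : LTS Q Lab) (q : Q) : Set (ELabel Lab) :=
  {x | M.outLabel q x}

/-- `in(q) = {ℓ ∈ I | q ==ℓ==>}`. -/
def inq (M : LTS Q Lab) (q : Q) : Set Lab :=
  {ℓ | ℓ ∈ M.I ∧ ∃ q', M.W q [ELabel.lab ℓ] q'}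

/-- `out(X) = ⋃_{q ∈ X} out(q)`. -/
def outSet (M : LTS Q Lab) (X : Set Q) : Set (ELabel Lab) :=
  ⋃ q ∈ X, M.outq q

/-- `in(X) = ⋂_{q ∈ X} in(q)`. -/
def inSet (M : LTS Q Lab) (X : Set Q) : Set Lab :=
  ⋂ q ∈ X, M.inq q

/-- Input-enabledness: `M` is an IOTS. -/
def InputEnabled (M : LTS Q Lab) : Prop :=
  ∀ q, ∀ ℓ ∈ M.I, ∃ q', M.W q [ELabel.lab ℓ] q'

/-- `Utraces(M)`. -/
def Utraces (M : LTS Q Lab) : Set (List (ELabel Lab)) :=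
  {σ | TraceIn M.L σ ∧ (∃ q', M.W M.q0 σ q') ∧
    ∀ σ1 ℓ σ2, σ = σ1 ++ ELabel.lab ℓ :: σ2 → ℓ ∈ M.I →
      ∀ q, M.W M.q0 σ1 q → ∃ q', M.W q [ELabel.lab ℓ] q'}

/-- An LTS is utrace-closed when every trace over `(L^δ)*` that it can
perform is a utrace. -/
def UtraceClosed (M : LTS Q Lab) : Prop :=
  ∀ σ : List (ELabel Lab), TraceIn M.L σ → (∃ q', M.W M.q0 σ q') → σ ∈ M.Utraces

end LTS

/-- `i uioco s`. -/
def Uioco {Qi Qs Lab : Type} (i : LTS Qi Lab) (s : LTS Qs Lab) : Prop :=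
  ∀ σ ∈ s.Utraces, i.outSet (i.after σ) ⊆ s.outSet (s.after σ)

/-- Composability: disjoint output label sets. -/
def Composable {Qs Qe Lab : Type} (s : LTS Qs Lab) (e : LTS Qe Lab) : Prop :=
  s.U ∩ e.U = ∅

/-- Parallel composition `s ∥ e`. -/
def par {Qs Qe Lab : Type} (s : LTS Qs Lab) (e : LTS Qe Lab) : LTS (Qs × Qe) Lab where
  I := (s.I \ e.U) ∪ (e.I \ s.U)
  U := s.U ∪ e.U
  T := fun p a p' =>
    match a with
    | none =>
        (s.T p.1 none p'.1 ∧ p'.2 = p.2) ∨ (e.T p.2 none p'.2 ∧ p'.1 = p.1)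
    | some ℓ =>
        (ℓ ∈ s.L ∧ ℓ ∉ e.L ∧ s.T p.1 (some ℓ) p'.1 ∧ p'.2 = p.2) ∨
        (ℓ ∈ e.L ∧ ℓ ∉ s.L ∧ e.T p.2 (some ℓ) p'.2 ∧ p'.1 = p.1) ∨
        (ℓ ∈ s.L ∧ ℓ ∈ e.L ∧ s.T p.1 (some ℓ) p'.1 ∧ e.T p.2 (some ℓ) p'.2)
  q0 := (s.q0, e.q0)

/-- `s accepts e`: along utraces of `s ∥ e`, every output of `e` that is an
input of `s` is (weakly) enabled in `s`. -/
def Accepts {Qs Qe Lab : Type} (s : LTS Qs Lab) (e : LTS Qe Lab) : Prop :=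
  ∀ σ ∈ (par s e).Utraces, ∀ qs qe, (par s e).W (par s e).q0 σ (qs, qe) →
    ∀ ℓ, ELabel.lab ℓ ∈ e.outq qe → ℓ ∈ s.I → ℓ ∈ s.inq qs

/-- `s mutually accepts e`. -/
def MutuallyAccepts {Qs Qe Lab : Type} (s : LTS Qs Lab) (e : LTS Qe Lab) : Prop :=
  Accepts s e ∧ Accepts e s

/-- `R` is an ecosim for `s` and `e`. -/
def IsEcosim {Qs Qe Lab : Type} (s : LTS Qs Lab) (e : LTS Qe Lab)
    (R : Set (Set Qs × Set Qe)) : Prop :=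
  (s.after [], e.after []) ∈ R ∧
  ∀ Xs Xe, (Xs, Xe) ∈ R →
    (∀ ℓ, ELabel.lab ℓ ∈ e.outSet Xe → ℓ ∈ s.I →
      ℓ ∈ s.inSet Xs ∧
        (s.afterSet Xs [ELabel.lab ℓ], e.afterSet Xe [ELabel.lab ℓ]) ∈ R) ∧
    (∀ ℓ, ELabel.lab ℓ ∈ s.outSet Xs → ℓ ∈ e.I →
      ℓ ∈ e.inSet Xe ∧
        (s.afterSet Xs [ELabel.lab ℓ], e.afterSet Xe [ELabel.lab ℓ]) ∈ R) ∧
    (∀ ℓ, (ELabel.lab ℓ ∈ e.outSet Xe ∨ ℓ ∈ e.inSet Xe) → ℓ ∉ s.L →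
      (Xs, e.afterSet Xe [ELabel.lab ℓ]) ∈ R) ∧
    (∀ ℓ, (ELabel.lab ℓ ∈ s.outSet Xs ∨ ℓ ∈ s.inSet Xs) → ℓ ∉ e.L →
      (s.afterSet Xs [ELabel.lab ℓ], Xe) ∈ R) ∧
    (∀ ℓ, ℓ ∈ s.inSet Xs → ℓ ∈ e.inSet Xe →
      (s.afterSet Xs [ELabel.lab ℓ], e.afterSet Xe [ELabel.lab ℓ]) ∈ R) ∧
    (ELabel.delta ∈ s.outSet Xs → ELabel.delta ∈ e.outSet Xe →
      (s.afterSet Xs [ELabel.delta], e.afterSet Xe [ELabel.delta]) ∈ R)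

/-- `s eco e`: there exists an ecosim for `s` and `e`. -/
def Eco {Qs Qe Lab : Type} (s : LTS Qs Lab) (e : LTS Qe Lab) : Prop :=
  ∃ R, IsEcosim s e R

/-- `R_U(s,e)`: the smallest relation closed under the given rules. -/
inductive RU {Qs Qe Lab : Type} (s : LTS Qs Lab) (e : LTS Qe Lab) :
    Set Qs → Set Qe → Prop
  | base : RU s e (s.after []) (e.after [])
  | syncOutE {Xs : Set Qs} {Xe : Set Qe} (ℓ : Lab) :
      RU s e Xs Xe → ELabel.lab ℓ ∈ e.outSet Xe → ℓ ∈ s.I →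
      RU s e (s.afterSet Xs [ELabel.lab ℓ]) (e.afterSet Xe [ELabel.lab ℓ])
  | syncOutS {Xs : Set Qs} {Xe : Set Qe} (ℓ : Lab) :
      RU s e Xs Xe → ELabel.lab ℓ ∈ s.outSet Xs → ℓ ∈ e.I →
      RU s e (s.afterSet Xs [ELabel.lab ℓ]) (e.afterSet Xe [ELabel.lab ℓ])
  | internalE {Xs : Set Qs} {Xe : Set Qe} (ℓ : Lab) :
      RU s e Xs Xe → (ELabel.lab ℓ ∈ e.outSet Xe ∨ ℓ ∈ e.inSet Xe) → ℓ ∉ s.L →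
      RU s e Xs (e.afterSet Xe [ELabel.lab ℓ])
  | internalS {Xs : Set Qs} {Xe : Set Qe} (ℓ : Lab) :
      RU s e Xs Xe → (ELabel.lab ℓ ∈ s.outSet Xs ∨ ℓ ∈ s.inSet Xs) → ℓ ∉ e.L →
      RU s e (s.afterSet Xs [ELabel.lab ℓ]) Xe
  | syncIn {Xs : Set Qs} {Xe : Set Qe} (ℓ : Lab) :
      RU s e Xs Xe → ℓ ∈ s.inSet Xs → ℓ ∈ e.inSet Xe →
      RU s e (s.afterSet Xs [ELabel.lab ℓ]) (e.afterSet Xe [ELabel.lab ℓ])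
  | qdelta {Xs : Set Qs} {Xe : Set Qe} :
      RU s e Xs Xe → ELabel.delta ∈ s.outSet Xs → ELabel.delta ∈ e.outSet Xe →
      RU s e (s.afterSet Xs [ELabel.delta]) (e.afterSet Xe [ELabel.delta])

open Classical in
/-- Projection `σ↾𝓛^δ` of a trace onto an (extended) label set: keeps `δ`
and the labels in `Ls`, removes all other labels. -/
noncomputable def projD {Lab : Type} (σ : List (ELabel Lab)) (Ls : Set Lab) :
    List (ELabel Lab) :=
  σ.filter fun x => decide (ELabel.inL Ls x)

open Classical in
/-- Projection `σ↾𝓛` of a trace of plain labels onto a label set. -/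
noncomputable def projL {Lab : Type} (σ : List Lab) (Ls : Set Lab) : List Lab :=
  σ.filter fun ℓ => decide (ℓ ∈ Ls)

open Classical in
/-- Substitution `σ[θ/δ]` of the label `θ` by the quiescence label `δ`. -/
noncomputable def substTheta {Lab : Type} (θ : Lab) (σ : List Lab) :
    List (ELabel Lab) :=
  σ.map fun ℓ => if ℓ = θ then ELabel.delta else ELabel.lab ℓ

/-- `⟨X⟩`: componentwise collection of a set of pairs of states. -/
def collect {Qs Qe : Type} (X : Set (Qs × Qe)) : Set Qs × Set Qe :=
  (Prod.fst '' X, Prod.snd '' X)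

/-- `q_s accepts q_e over σ`. -/
def AcceptsOver {Qs Qe Lab : Type} (s : LTS Qs Lab) (e : LTS Qe Lab)
    (qs : Qs) (qe : Qe) (σ : List (ELabel Lab)) : Prop :=
  ∀ σ1 σ2 : List (ELabel Lab), σ1 ++ σ2 = σ →
    ∀ (qs' : Qs) (qe' : Qe), (par s e).W (qs, qe) σ1 (qs', qe') →
      ∀ ℓ, ELabel.lab ℓ ∈ e.outq qe' → ℓ ∈ s.I → ℓ ∈ s.inq qs' ∧ ℓ ∈ e.U

/-- `q_s mutually accepts q_e over σ`. -/
def MutuallyAcceptsOver {Qs Qe Lab : Type} (s : LTS Qs Lab) (e : LTS Qe Lab)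
    (qs : Qs) (qe : Qe) (σ : List (ELabel Lab)) : Prop :=
  AcceptsOver s e qs qe σ ∧ AcceptsOver e s qe qs σ

/-- A test case: a quasi-finite tree-shaped LTS without `τ`-transitions, with
terminal states `pass` and `fail` carrying input self-loops, a special
quiescence-observation input `θ`, at most one output transition per state,
and receptive to all inputs other than `θ`. -/
structure TestCase (Qt Lab : Type) extends LTS Qt Lab where
  passS : Qt
  failS : Qt
  theta : Lab
  theta_input : theta ∈ I
  no_tau : ∀ q q', ¬ T q none q'
  tree : ∀ q, q ≠ q0 → q ≠ passS → q ≠ failS →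
    ∃! p : Qt × Option Lab, T p.1 p.2 q
  pass_loops : ∀ ℓ ∈ I, T passS (some ℓ) passS
  pass_terminal : ∀ a q', T passS a q' → q' = passS ∧ ∃ ℓ ∈ I, a = some ℓ
  fail_loops : ∀ ℓ ∈ I, T failS (some ℓ) failS
  fail_terminal : ∀ a q', T failS a q' → q' = failS ∧ ∃ ℓ ∈ I, a = some ℓ
  one_output : ∀ q ℓ ℓ' q' q'', ℓ ∈ U → ℓ' ∈ U →
    T q (some ℓ) q' → T q (some ℓ') q'' → ℓ = ℓ' ∧ q' = q''
  receptive : ∀ q, ∀ ℓ ∈ I, ℓ ≠ theta → ∃ q', T q (some ℓ) q'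

/-- Test execution `t ⫿ i` of a test case `t` with an implementation `i`. -/
def testExec {Qt Qi Lab : Type} (t : TestCase Qt Lab) (i : LTS Qi Lab) :
    LTS (Qt × Qi) Lab where
  I := ∅
  U := i.U ∪ (t.toLTS.L \ {t.theta})
  T := fun p a p' =>
    match a with
    | none => i.T p.2 none p'.2 ∧ p'.1 = p.1
    | some ℓ =>
        (ℓ ∈ i.L ∧ ℓ ∉ t.toLTS.L ∧ i.T p.2 (some ℓ) p'.2 ∧ p'.1 = p.1) ∨
        (ℓ ∈ t.toLTS.L ∧ ℓ ∉ i.L ∧ ℓ ≠ t.theta ∧ t.T p.1 (some ℓ) p'.1 ∧ p'.2 = p.2) ∨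
        (ℓ ∈ i.L ∧ ℓ ∈ t.toLTS.L ∧ t.T p.1 (some ℓ) p'.1 ∧ i.T p.2 (some ℓ) p'.2) ∨
        (ℓ = t.theta ∧ t.T p.1 (some ℓ) p'.1 ∧ p'.2 = p.2 ∧ i.Quiescent p.2)
  q0 := (t.q0, i.q0)

/-!
A state of `s ∥ e` is a pair, and each component only sees the labels of its own alphabet, so one
expects `(s ∥ e) after σ` to be the product of `s after σ↾L_s` and `e after σ↾L_e`. For ordinary
labels this always holds; for `δ` it can fail, since `q_s ∥ q_e` is also quiescent when an output
of one component is refused by the other. On the pairs of `R_U` this does not happen: every ecosim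
contains `R_U`, so outputs are accepted there. Given the product form, a utrace `σ` of `s ∥ e`
extends by `x` to another utrace exactly when `x` is an output, or an input accepted in all states,
of each component that knows `x`. These are also the extensions listed in the rules of `R_U`, so
`R_U` consists of the pairs `(s after σ↾L_s, e after σ↾L_e)` with `σ` a utrace.
-/

section Projection

variable {Lab : Type} {Ls : Set Lab} {ℓ : Lab}

theorem projD_append (σ ρ : List (ELabel Lab)) (Ls : Set Lab) :
    projD (σ ++ ρ) Ls = projD σ Ls ++ projD ρ Ls :=
  List.filter_append ..

theorem projD_delta (Ls : Set Lab) : projD [.delta] Ls = [.delta] := by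
  have hδ : ELabel.inL Ls .delta := trivial
  simp [projD, hδ]

theorem projD_lab_of_mem (hℓ : ℓ ∈ Ls) : projD [.lab ℓ] Ls = [.lab ℓ] := by
  simp [projD, ELabel.inL, hℓ]

theorem projD_lab_of_notMem (hℓ : ℓ ∉ Ls) : projD [.lab ℓ] Ls = [] := by
  simp [projD, ELabel.inL, hℓ]

end Projection

namespace LTS

variable {Q Lab : Type} {M : LTS Q Lab} {X : Set Q} {q q' r : Q} {σ ρ : List (ELabel Lab)}
  {x : ELabel Lab} {ℓ : Lab}

theorem W_nil_iff : M.W q [] q' ↔ M.Eps q q' := by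
  refine ⟨fun h => ?_, W.nil⟩
  generalize hσ : ([] : List (ELabel Lab)) = σ at h
  cases h with
  | nil hε => exact hε
  | snoc _ _ _ => simp at hσ

theorem W_append_singleton_iff :
    M.W q (σ ++ [x]) q' ↔ ∃ q₁ q₂, M.W q σ q₁ ∧ M.VStep q₁ x q₂ ∧ M.Eps q₂ q' := by
  refine ⟨fun h => ?_, fun ⟨_, _, hσ, hx, hε⟩ => W.snoc hσ hx hε⟩
  generalize hρ : σ ++ [x] = ρ at h
  cases h with
  | nil _ => simp at hρ
  | snoc hσ hx hε =>
    obtain ⟨rfl, hxy⟩ := List.append_inj' hρ rfl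
    obtain rfl := List.singleton_inj.1 hxy
    exact ⟨_, _, hσ, hx, hε⟩

theorem W_singleton_iff :
    M.W q [x] q' ↔ ∃ q₁ q₂, M.Eps q q₁ ∧ M.VStep q₁ x q₂ ∧ M.Eps q₂ q' := by
  simpa only [List.nil_append, W_nil_iff] using W_append_singleton_iff (M := M) (σ := [])

theorem W.trans_eps (h : M.W q σ r) (hε : M.Eps r q') : M.W q σ q' := by
  cases h with
  | nil hε' => exact W.nil (hε'.trans hε)
  | snoc hσ hx hε' => exact W.snoc hσ hx (hε'.trans hε)

theorem W_append_iff : M.W q (σ ++ ρ) q' ↔ ∃ r, M.W q σ r ∧ M.W r ρ q' := by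
  induction ρ using List.reverseRecOn generalizing q' with
  | nil =>
    rw [List.append_nil]
    exact ⟨fun h => ⟨q', h, .nil .refl⟩, fun ⟨_, hσ, hε⟩ => hσ.trans_eps (W_nil_iff.1 hε)⟩
  | append_singleton ρ x ih =>
    simp only [← List.append_assoc, W_append_singleton_iff, ih]
    grind

theorem Eps.eq_of_stable (hε : M.Eps q q') (hτ : ∀ r, ¬ M.T q none r) : q' = q := by
  rcases hε.cases_head with rfl | ⟨r, hr, -⟩
  · rfl
  · exact absurd hr (hτ r)

theorem W_delta_iff : M.W q [.delta] q' ↔ M.Eps q q' ∧ M.Quiescent q' := by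
  rw [W_singleton_iff]
  constructor
  · rintro ⟨q₁, _, hε, ⟨rfl, hq⟩, hε'⟩
    obtain rfl := Eps.eq_of_stable hε' hq.2
    exact ⟨hε, hq⟩
  · rintro ⟨hε, hq⟩
    exact ⟨q', q', hε, ⟨rfl, hq⟩, .refl⟩

theorem mem_outSet_lab : .lab ℓ ∈ M.outSet X ↔ ℓ ∈ M.U ∧ ∃ q ∈ X, ∃ q', M.T q (some ℓ) q' := by
  simp only [outSet, outq, outLabel, Set.mem_iUnion, Set.mem_ofPred_eq]
  grind

theorem mem_outSet_delta : .delta ∈ M.outSet X ↔ ∃ q ∈ X, M.Quiescent q := by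
  simp [outSet, outq, outLabel]

theorem mem_inSet : ℓ ∈ M.inSet X ↔ ∀ q ∈ X, ℓ ∈ M.I ∧ ∃ q', M.W q [.lab ℓ] q' := by
  simp [inSet, inq]

theorem mem_L_of_mem_outSet_or_mem_inSet (hX : X.Nonempty)
    (h : .lab ℓ ∈ M.outSet X ∨ ℓ ∈ M.inSet X) : ℓ ∈ M.L := by
  obtain ⟨q, hq⟩ := hX
  exact h.elim (fun hout => .inr (mem_outSet_lab.1 hout).1) fun hin => .inl (mem_inSet.1 hin q hq).1

theorem nil_mem_Utraces : [] ∈ M.Utraces :=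
  ⟨by simp [TraceIn], ⟨M.q0, .nil .refl⟩, by simp⟩

theorem append_singleton_mem_Utraces_iff :
    σ ++ [x] ∈ M.Utraces ↔ σ ∈ M.Utraces ∧ ELabel.inL M.L x ∧ (M.after (σ ++ [x])).Nonempty ∧
      ∀ ℓ ∈ M.I, x = .lab ℓ → ∀ q ∈ M.after σ, ∃ q', M.W q [.lab ℓ] q' := by
  constructor
  · rintro ⟨hL, ⟨p, hp⟩, hin⟩
    obtain ⟨r, hr, -⟩ := W_append_iff.1 hp
    refine ⟨⟨fun y hy => hL y (by simp [hy]), ⟨r, hr⟩, fun σ₁ ℓ σ₂ hσ => ?_⟩,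
      hL x (by simp), ⟨p, hp⟩, ?_⟩
    · exact hin σ₁ ℓ (σ₂ ++ [x]) (by simp [hσ])
    · rintro ℓ hℓ rfl
      exact hin σ ℓ [] rfl hℓ
  · rintro ⟨⟨hL, -, hin⟩, hx, hne, hlast⟩
    refine ⟨fun y hy => ?_, hne, fun σ₁ ℓ σ₂ hσ hℓ => ?_⟩
    · rcases List.mem_append.1 hy with hy | hy
      · exact hL y hy
      · rwa [List.mem_singleton.1 hy]
    · rcases List.eq_nil_or_concat σ₂ with rfl | ⟨σ₃, y, rfl⟩
      · obtain ⟨rfl, hxℓ⟩ := List.append_inj' hσ rfl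
        exact hlast ℓ hℓ (List.singleton_inj.1 hxℓ)
      · have hσ' : σ ++ [x] = (σ₁ ++ .lab ℓ :: σ₃) ++ [y] := by simpa using hσ
        exact hin σ₁ ℓ σ₃ (List.append_inj' hσ' rfl).1 hℓ

/-- `M after σ↾L_M`: the states `M` may be in when its environment has performed `σ`, a trace that
may contain labels unknown to `M`. -/
def afterProj (M : LTS Q Lab) (σ : List (ELabel Lab)) : Set Q :=
  M.after (projD σ M.L)

theorem mem_afterProj_append_singleton :
    q' ∈ M.afterProj (σ ++ [x]) ↔ ∃ q ∈ M.afterProj σ, M.W q (projD [x] M.L) q' := by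
  rw [afterProj, projD_append]
  exact W_append_iff

theorem afterProj_append_delta :
    M.afterProj (σ ++ [.delta]) = M.afterSet (M.afterProj σ) [.delta] := by
  ext q
  rw [mem_afterProj_append_singleton, projD_delta]
  rfl

theorem afterProj_append_lab_of_mem (hℓ : ℓ ∈ M.L) :
    M.afterProj (σ ++ [.lab ℓ]) = M.afterSet (M.afterProj σ) [.lab ℓ] := by
  ext q
  rw [mem_afterProj_append_singleton, projD_lab_of_mem hℓ]
  rfl

theorem afterProj_append_lab_of_notMem (hℓ : ℓ ∉ M.L) :
    M.afterProj (σ ++ [.lab ℓ]) = M.afterProj σ := by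
  rw [afterProj, projD_append, projD_lab_of_notMem hℓ, List.append_nil, afterProj]

theorem mem_afterProj_of_eps (hq : q ∈ M.afterProj σ) (hε : M.Eps q q') : q' ∈ M.afterProj σ :=
  W.trans_eps hq hε

theorem mem_afterProj_append_delta :
    q ∈ M.afterProj (σ ++ [.delta]) ↔ q ∈ M.afterProj σ ∧ M.Quiescent q := by
  rw [mem_afterProj_append_singleton, projD_delta]
  constructor
  · rintro ⟨r, hr, hw⟩
    obtain ⟨hε, hq⟩ := W_delta_iff.1 hw
    exact ⟨mem_afterProj_of_eps hr hε, hq⟩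
  · rintro ⟨hσ, hq⟩
    exact ⟨q, hσ, W_delta_iff.2 ⟨.refl, hq⟩⟩

/-- The move of `M` when a composition containing `M` performs `ℓ`: `M` takes part if `ℓ` is one of
its labels and stays put otherwise. -/
def LocalStep (M : LTS Q Lab) (q : Q) (ℓ : Lab) (q' : Q) : Prop :=
  (ℓ ∈ M.L ∧ M.T q (some ℓ) q') ∨ (ℓ ∉ M.L ∧ q' = q)

theorem W_projD_lab_iff : M.W q (projD [.lab ℓ] M.L) q' ↔
    ∃ q₁ q₂, M.Eps q q₁ ∧ M.LocalStep q₁ ℓ q₂ ∧ M.Eps q₂ q' := by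
  by_cases hℓ : ℓ ∈ M.L
  · rw [projD_lab_of_mem hℓ, W_singleton_iff]
    simp [LocalStep, hℓ, VStep]
  · rw [projD_lab_of_notMem hℓ, W_nil_iff]
    simp only [LocalStep, hℓ, false_and, not_false_eq_true, true_and, false_or]
    exact ⟨fun hε => ⟨q', q', hε, rfl, .refl⟩, by rintro ⟨_, _, hε, rfl, hε'⟩; exact hε.trans hε'⟩

theorem exists_localStep_of_stable (hτ : ∀ r, ¬ M.T q none r)
    (hW : ℓ ∈ M.L → ∃ q', M.W q [.lab ℓ] q') : ∃ q', M.LocalStep q ℓ q' := by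
  by_cases hℓ : ℓ ∈ M.L
  · obtain ⟨_, hq'⟩ := hW hℓ
    obtain ⟨q₁, q₂, hε, hstep, -⟩ := W_singleton_iff.1 hq'
    obtain rfl := Eps.eq_of_stable hε hτ
    exact ⟨q₂, .inl ⟨hℓ, hstep⟩⟩
  · exact ⟨q, .inr ⟨hℓ, rfl⟩⟩

/-- `M`, known to be in one of the states `X`, does not stand in the way of `x`: either `x` is
unknown to `M`, or it is in `out(X) ∪ in(X)`. -/
def Enables (M : LTS Q Lab) (X : Set Q) (x : ELabel Lab) : Prop :=
  ELabel.inL M.L x → x ∈ M.outSet X ∪ ELabel.lab '' M.inSet X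

theorem enables_delta_iff : M.Enables X .delta ↔ .delta ∈ M.outSet X := by
  simp [Enables, ELabel.inL]

theorem enables_lab_iff :
    M.Enables X (.lab ℓ) ↔ (ℓ ∈ M.L → .lab ℓ ∈ M.outSet X ∨ ℓ ∈ M.inSet X) := by
  simp [Enables, ELabel.inL]

theorem enables_lab_of_notMem_L (hℓ : ℓ ∉ M.L) : M.Enables X (.lab ℓ) :=
  fun h => absurd h hℓ

theorem LocalStep.mem_outSet (hstep : M.LocalStep q ℓ q') (hU : ℓ ∈ M.U) (hq : q ∈ X) :
    .lab ℓ ∈ M.outSet X := by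
  rcases hstep with ⟨-, hT⟩ | ⟨hL, -⟩
  · exact mem_outSet_lab.2 ⟨hU, q, hq, q', hT⟩
  · exact absurd (.inr hU) hL

theorem LocalStep.enables (hstep : M.LocalStep q ℓ q') (hq : q ∈ X)
    (hin : ℓ ∈ M.I → ℓ ∈ M.inSet X) : M.Enables X (.lab ℓ) :=
  enables_lab_iff.2 fun hL => hL.symm.imp (hstep.mem_outSet · hq) hin

theorem Enables.exists_W_of_notMem_outSet (h : M.Enables X (.lab ℓ))
    (hout : .lab ℓ ∉ M.outSet X) (hq : q ∈ X) : ∃ q', M.W q (projD [.lab ℓ] M.L) q' := by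
  by_cases hL : ℓ ∈ M.L
  · rw [projD_lab_of_mem hL]
    exact (mem_inSet.1 ((enables_lab_iff.1 h hL).resolve_left hout) q hq).2
  · rw [projD_lab_of_notMem hL]
    exact ⟨q, .nil .refl⟩

theorem Enables.afterProj_append_nonempty (h : M.Enables (M.afterProj σ) x)
    (hσ : (M.afterProj σ).Nonempty) : (M.afterProj (σ ++ [x])).Nonempty := by
  cases x with
  | delta =>
    obtain ⟨q, hq, hquiet⟩ := mem_outSet_delta.1 (enables_delta_iff.1 h)
    exact ⟨q, mem_afterProj_append_delta.2 ⟨hq, hquiet⟩⟩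
  | lab ℓ =>
    by_cases hout : .lab ℓ ∈ M.outSet (M.afterProj σ)
    · obtain ⟨hU, q, hq, q', hT⟩ := mem_outSet_lab.1 hout
      have hw : M.W q (projD [.lab ℓ] M.L) q' :=
        W_projD_lab_iff.2 ⟨q, q', .refl, .inl ⟨.inr hU, hT⟩, .refl⟩
      exact ⟨q', mem_afterProj_append_singleton.2 ⟨q, hq, hw⟩⟩
    · obtain ⟨q, hq⟩ := hσ
      obtain ⟨q', hw⟩ := h.exists_W_of_notMem_outSet hout hq
      exact ⟨q', mem_afterProj_append_singleton.2 ⟨q, hq, hw⟩⟩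

end LTS

section Parallel

variable {Qs Qe Lab : Type} {s : LTS Qs Lab} {e : LTS Qe Lab} {p p' : Qs × Qe}
  {Xs : Set Qs} {Xe : Set Qe} {qs : Qs} {qe : Qe} {σ : List (ELabel Lab)} {x : ELabel Lab} {ℓ : Lab}

theorem Composable.symm (h : Composable s e) : Composable e s :=
  (Set.inter_comm e.U s.U).trans h

theorem Composable.mem_I_of_mem_U (h : Composable s e) (hU : ℓ ∈ s.U) (hL : ℓ ∈ e.L) : ℓ ∈ e.I :=
  hL.resolve_right fun hU' => Set.notMem_empty ℓ (h ▸ ⟨hU, hU'⟩)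

theorem mem_par_L : ℓ ∈ (par s e).L ↔ ℓ ∈ s.L ∨ ℓ ∈ e.L := by
  simp only [LTS.L, par, Set.mem_union, Set.mem_sdiff]
  tauto

theorem disjoint_par_I_U (hs : Disjoint s.I s.U) (he : Disjoint e.I e.U) :
    Disjoint (par s e).I (par s e).U := by
  rw [Set.disjoint_left] at hs he ⊢
  rintro ℓ (⟨hI, hU⟩ | ⟨hI, hU⟩) (hU' | hU')
  exacts [hs hI hU', hU hU', hU hU', he hI hU']

theorem par_T_some_iff : (par s e).T p (some ℓ) p' ↔
    ℓ ∈ (par s e).L ∧ s.LocalStep p.1 ℓ p'.1 ∧ e.LocalStep p.2 ℓ p'.2 := by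
  rw [mem_par_L]
  simp only [par, LTS.LocalStep]
  tauto

theorem par_Eps_iff : (par s e).Eps p p' ↔ s.Eps p.1 p'.1 ∧ e.Eps p.2 p'.2 := by
  constructor
  · intro h
    induction h with
    | refl => exact ⟨.refl, .refl⟩
    | tail _ hτ ih =>
      rcases hτ with ⟨hτ, hfix⟩ | ⟨hτ, hfix⟩
      · exact ⟨ih.1.tail hτ, hfix ▸ ih.2⟩
      · exact ⟨hfix ▸ ih.1, ih.2.tail hτ⟩
  · rintro ⟨hs, he⟩
    have left_moves : (par s e).Eps (p.1, p.2) (p'.1, p.2) :=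
      hs.lift (·, p.2) fun _ _ hτ => .inl ⟨hτ, rfl⟩
    have right_moves : (par s e).Eps (p'.1, p.2) (p'.1, p'.2) :=
      he.lift (p'.1, ·) fun _ _ hτ => .inr ⟨hτ, rfl⟩
    exact left_moves.trans right_moves

theorem par_W_lab_iff (hℓ : ℓ ∈ (par s e).L) : (par s e).W p [.lab ℓ] p' ↔
    s.W p.1 (projD [.lab ℓ] s.L) p'.1 ∧ e.W p.2 (projD [.lab ℓ] e.L) p'.2 := by
  simp only [LTS.W_singleton_iff, LTS.VStep, LTS.W_projD_lab_iff, par_Eps_iff, par_T_some_iff]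
  constructor
  · rintro ⟨p₁, p₂, ⟨hεs, hεe⟩, ⟨-, hstep_s, hstep_e⟩, hεs₂, hεe₂⟩
    exact ⟨⟨_, _, hεs, hstep_s, hεs₂⟩, ⟨_, _, hεe, hstep_e, hεe₂⟩⟩
  · rintro ⟨⟨a₁, a₂, hεs, hstep_s, hεs₂⟩, ⟨b₁, b₂, hεe, hstep_e, hεe₂⟩⟩
    exact ⟨(a₁, b₁), (a₂, b₂), ⟨hεs, hεe⟩, ⟨hℓ, hstep_s, hstep_e⟩, hεs₂, hεe₂⟩

/-- Every output of `e` in a state of `Xe` that is an input of `s` is accepted by `s` in all states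
of `Xs`: condition (a) on an ecosim, or (b) with `s` and `e` exchanged, stripped of the requirement
on the successors. -/
def AcceptsOn (s : LTS Qs Lab) (e : LTS Qe Lab) (Xs : Set Qs) (Xe : Set Qe) : Prop :=
  ∀ ℓ, .lab ℓ ∈ e.outSet Xe → ℓ ∈ s.I → ℓ ∈ s.inSet Xs

/-- `AcceptsOn` in both directions; this is what makes quiescence of a pair of states
componentwise. -/
def MutuallyAcceptsOn (s : LTS Qs Lab) (e : LTS Qe Lab) (Xs : Set Qs) (Xe : Set Qe) : Prop :=
  AcceptsOn s e Xs Xe ∧ AcceptsOn e s Xe Xs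

theorem AcceptsOn.exists_localStep (hacc : AcceptsOn e s Xe Xs) (hcomp : Composable s e)
    (hout : .lab ℓ ∈ s.outSet Xs) (hqe : qe ∈ Xe) (hτ : ∀ r, ¬ e.T qe none r) :
    ∃ r, e.LocalStep qe ℓ r :=
  LTS.exists_localStep_of_stable hτ fun hL =>
    have hI : ℓ ∈ e.I := hcomp.mem_I_of_mem_U (LTS.mem_outSet_lab.1 hout).1 hL
    (LTS.mem_inSet.1 (hacc ℓ hout hI) qe hqe).2

theorem LTS.Quiescent.par (hs : s.Quiescent qs) (he : e.Quiescent qe) :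
    (par s e).Quiescent (qs, qe) := by
  refine ⟨fun ℓ hU p hT => ?_, fun p hτ => ?_⟩
  · obtain ⟨-, hs', he'⟩ := par_T_some_iff.1 hT
    rcases hU with hU | hU
    · exact hs'.elim (fun h => hs.1 ℓ hU _ h.2) fun h => h.1 (.inr hU)
    · exact he'.elim (fun h => he.1 ℓ hU _ h.2) fun h => h.1 (.inr hU)
  · exact hτ.elim (fun h => hs.2 _ h.1) fun h => he.2 _ h.1

theorem MutuallyAcceptsOn.par_Quiescent_iff (hacc : MutuallyAcceptsOn s e Xs Xe)
    (hcomp : Composable s e) (hqs : qs ∈ Xs) (hqe : qe ∈ Xe) :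
    (par s e).Quiescent (qs, qe) ↔ s.Quiescent qs ∧ e.Quiescent qe := by
  refine ⟨fun ⟨hout, hτ⟩ => ?_, fun h => h.1.par h.2⟩
  have hτs : ∀ r, ¬ s.T qs none r := fun r h => hτ (r, qe) (.inl ⟨h, rfl⟩)
  have hτe : ∀ r, ¬ e.T qe none r := fun r h => hτ (qs, r) (.inr ⟨h, rfl⟩)
  refine ⟨⟨fun ℓ hU r hT => ?_, hτs⟩, ⟨fun ℓ hU r hT => ?_, hτe⟩⟩
  · obtain ⟨r', hr'⟩ := hacc.2.exists_localStep hcomp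
      (LTS.mem_outSet_lab.2 ⟨hU, qs, hqs, r, hT⟩) hqe hτe
    exact hout ℓ (.inl hU) (r, r')
      (par_T_some_iff.2 ⟨.inr (.inl hU), .inl ⟨.inr hU, hT⟩, hr'⟩)
  · obtain ⟨r', hr'⟩ := hacc.1.exists_localStep hcomp.symm
      (LTS.mem_outSet_lab.2 ⟨hU, qe, hqe, r, hT⟩) hqs hτs
    exact hout ℓ (.inr hU) (r', r)
      (par_T_some_iff.2 ⟨.inr (.inr hU), hr', .inl ⟨.inr hU, hT⟩⟩)

/-- `(s ∥ e) after σ` is the product of `s after σ↾L_s` and `e after σ↾L_e`. -/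
def AfterIsProd (s : LTS Qs Lab) (e : LTS Qe Lab) (σ : List (ELabel Lab)) : Prop :=
  (par s e).after σ = s.afterProj σ ×ˢ e.afterProj σ

theorem AfterIsProd.mem_iff (h : AfterIsProd s e σ) :
    p ∈ (par s e).after σ ↔ p.1 ∈ s.afterProj σ ∧ p.2 ∈ e.afterProj σ := by
  rw [h, Set.mem_prod]

theorem AfterIsProd.nonempty_of_mem_Utraces (h : AfterIsProd s e σ)
    (hσ : σ ∈ (par s e).Utraces) : (s.afterProj σ).Nonempty ∧ (e.afterProj σ).Nonempty := by
  have hne : ((par s e).after σ).Nonempty := hσ.2.1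
  rwa [h, Set.prod_nonempty_iff] at hne

theorem afterIsProd_nil : AfterIsProd s e [] := by
  ext p
  simp only [LTS.after, LTS.afterProj, projD, List.filter_nil, LTS.W_nil_iff, par_Eps_iff,
    Set.mem_prod, Set.mem_ofPred_eq]
  rfl

theorem AfterIsProd.append_lab (h : AfterIsProd s e σ) (hℓ : ℓ ∈ (par s e).L) :
    AfterIsProd s e (σ ++ [.lab ℓ]) := by
  ext p
  simp only [Set.mem_prod, LTS.mem_afterProj_append_singleton]
  constructor
  · intro hp
    obtain ⟨r, hr, hw⟩ := LTS.W_append_iff.1 hp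
    obtain ⟨hrs, hre⟩ := h.mem_iff.1 hr
    obtain ⟨hws, hwe⟩ := (par_W_lab_iff hℓ).1 hw
    exact ⟨⟨_, hrs, hws⟩, ⟨_, hre, hwe⟩⟩
  · rintro ⟨⟨rs, hrs, hws⟩, ⟨re, hre, hwe⟩⟩
    exact LTS.W_append_iff.2
      ⟨(rs, re), h.mem_iff.2 ⟨hrs, hre⟩, (par_W_lab_iff hℓ).2 ⟨hws, hwe⟩⟩

theorem AfterIsProd.append_delta (h : AfterIsProd s e σ) (hcomp : Composable s e)
    (hacc : MutuallyAcceptsOn s e (s.afterProj σ) (e.afterProj σ)) :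
    AfterIsProd s e (σ ++ [.delta]) := by
  ext ⟨qs, qe⟩
  simp only [Set.mem_prod, LTS.mem_afterProj_append_delta]
  constructor
  · intro hp
    obtain ⟨r, hr, hw⟩ := LTS.W_append_iff.1 hp
    obtain ⟨hε, hquiet⟩ := LTS.W_delta_iff.1 hw
    obtain ⟨hqs, hqe⟩ := h.mem_iff.1 (hr.trans_eps hε)
    obtain ⟨hquiet_s, hquiet_e⟩ := (hacc.par_Quiescent_iff hcomp hqs hqe).1 hquiet
    exact ⟨⟨hqs, hquiet_s⟩, ⟨hqe, hquiet_e⟩⟩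
  · rintro ⟨⟨hqs, hquiet_s⟩, ⟨hqe, hquiet_e⟩⟩
    exact LTS.W_append_iff.2 ⟨(qs, qe), h.mem_iff.2 ⟨hqs, hqe⟩,
      LTS.W_delta_iff.2 ⟨.refl, hquiet_s.par hquiet_e⟩⟩

theorem AfterIsProd.append_singleton (h : AfterIsProd s e σ) (hcomp : Composable s e)
    (hacc : MutuallyAcceptsOn s e (s.afterProj σ) (e.afterProj σ))
    (hx : ELabel.inL (par s e).L x) : AfterIsProd s e (σ ++ [x]) := by
  cases x with
  | delta => exact h.append_delta hcomp hacc
  | lab ℓ => exact h.append_lab hx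

theorem AfterIsProd.enables_of_append_mem_Utraces (h : AfterIsProd s e σ) (hcomp : Composable s e)
    (hacc : MutuallyAcceptsOn s e (s.afterProj σ) (e.afterProj σ))
    (hσx : σ ++ [x] ∈ (par s e).Utraces) :
    s.Enables (s.afterProj σ) x ∧ e.Enables (e.afterProj σ) x := by
  obtain ⟨-, hx, ⟨_, hp⟩, hin⟩ := LTS.append_singleton_mem_Utraces_iff.1 hσx
  obtain ⟨r, r', hr, hstep, -⟩ := LTS.W_append_singleton_iff.1 hp
  obtain ⟨hrs, hre⟩ := h.mem_iff.1 hr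
  cases x with
  | delta =>
    obtain ⟨hquiet_s, hquiet_e⟩ := (hacc.par_Quiescent_iff hcomp hrs hre).1 hstep.2
    exact ⟨LTS.enables_delta_iff.2 (LTS.mem_outSet_delta.2 ⟨_, hrs, hquiet_s⟩),
      LTS.enables_delta_iff.2 (LTS.mem_outSet_delta.2 ⟨_, hre, hquiet_e⟩)⟩
  | lab ℓ =>
    obtain ⟨-, hstep_s, hstep_e⟩ := par_T_some_iff.1 hstep
    refine ⟨hstep_s.enables hrs fun hI => ?_, hstep_e.enables hre fun hI => ?_⟩
    · by_cases hU : ℓ ∈ e.U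
      · exact hacc.1 ℓ (hstep_e.mem_outSet hU hre) hI
      · refine LTS.mem_inSet.2 fun q hq => ⟨hI, ?_⟩
        obtain ⟨q', hw⟩ := hin ℓ (.inl ⟨hI, hU⟩) rfl (q, r.2) (h.mem_iff.2 ⟨hq, hre⟩)
        exact ⟨q'.1, projD_lab_of_mem (Ls := s.L) (.inl hI) ▸ ((par_W_lab_iff hx).1 hw).1⟩
    · by_cases hU : ℓ ∈ s.U
      · exact hacc.2 ℓ (hstep_s.mem_outSet hU hrs) hI
      · refine LTS.mem_inSet.2 fun q hq => ⟨hI, ?_⟩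
        obtain ⟨q', hw⟩ := hin ℓ (.inr ⟨hI, hU⟩) rfl (r.1, q) (h.mem_iff.2 ⟨hrs, hq⟩)
        exact ⟨q'.2, projD_lab_of_mem (Ls := e.L) (.inl hI) ▸ ((par_W_lab_iff hx).1 hw).2⟩

theorem AfterIsProd.append_mem_Utraces (h : AfterIsProd s e σ) (hs : Disjoint s.I s.U)
    (he : Disjoint e.I e.U) (hcomp : Composable s e)
    (hacc : MutuallyAcceptsOn s e (s.afterProj σ) (e.afterProj σ))
    (hσ : σ ∈ (par s e).Utraces) (hx : ELabel.inL (par s e).L x)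
    (hxs : s.Enables (s.afterProj σ) x) (hxe : e.Enables (e.afterProj σ) x) :
    σ ++ [x] ∈ (par s e).Utraces := by
  obtain ⟨hnes, hnee⟩ := h.nonempty_of_mem_Utraces hσ
  refine LTS.append_singleton_mem_Utraces_iff.2 ⟨hσ, hx, ?_, ?_⟩
  · rw [h.append_singleton hcomp hacc hx]
    exact (hxs.afterProj_append_nonempty hnes).prod (hxe.afterProj_append_nonempty hnee)
  · rintro ℓ hI rfl q hq
    obtain ⟨hqs, hqe⟩ := h.mem_iff.1 hq
    have hU : ℓ ∉ (par s e).U := Set.disjoint_left.1 (disjoint_par_I_U hs he) hI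
    obtain ⟨rs, hws⟩ := hxs.exists_W_of_notMem_outSet
      (fun hout => hU (.inl (LTS.mem_outSet_lab.1 hout).1)) hqs
    obtain ⟨re, hwe⟩ := hxe.exists_W_of_notMem_outSet
      (fun hout => hU (.inr (LTS.mem_outSet_lab.1 hout).1)) hqe
    exact ⟨(rs, re), (par_W_lab_iff hx).2 ⟨hws, hwe⟩⟩

theorem RU.mem_of_isEcosim {R : Set (Set Qs × Set Qe)} (hR : IsEcosim s e R)
    (hX : RU s e Xs Xe) : (Xs, Xe) ∈ R := by
  obtain ⟨hbase, hstep⟩ := hR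
  induction hX with
  | base => exact hbase
  | syncOutE ℓ _ hout hI ih => exact ((hstep _ _ ih).1 ℓ hout hI).2
  | syncOutS ℓ _ hout hI ih => exact ((hstep _ _ ih).2.1 ℓ hout hI).2
  | internalE ℓ _ hen hL ih => exact (hstep _ _ ih).2.2.1 ℓ hen hL
  | internalS ℓ _ hen hL ih => exact (hstep _ _ ih).2.2.2.1 ℓ hen hL
  | syncIn ℓ _ hins hine ih => exact (hstep _ _ ih).2.2.2.2.1 ℓ hins hine
  | qdelta _ hquiet_s hquiet_e ih => exact (hstep _ _ ih).2.2.2.2.2 hquiet_s hquiet_e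

theorem Eco.mutuallyAcceptsOn (heco : Eco s e) (hX : RU s e Xs Xe) :
    MutuallyAcceptsOn s e Xs Xe := by
  obtain ⟨R, hR⟩ := heco
  obtain ⟨accepts_e, accepts_s, -⟩ := hR.2 _ _ (hX.mem_of_isEcosim hR)
  exact ⟨fun ℓ hout hI => (accepts_e ℓ hout hI).1, fun ℓ hout hI => (accepts_s ℓ hout hI).1⟩

theorem RU.append_singleton (hX : RU s e (s.afterProj σ) (e.afterProj σ)) (hcomp : Composable s e)
    (hx : ELabel.inL (par s e).L x) (hxs : s.Enables (s.afterProj σ) x)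
    (hxe : e.Enables (e.afterProj σ) x) :
    RU s e (s.afterProj (σ ++ [x])) (e.afterProj (σ ++ [x])) := by
  cases x with
  | delta =>
    rw [LTS.afterProj_append_delta, LTS.afterProj_append_delta]
    exact .qdelta hX (LTS.enables_delta_iff.1 hxs) (LTS.enables_delta_iff.1 hxe)
  | lab ℓ =>
    rw [LTS.enables_lab_iff] at hxs hxe
    by_cases hs : ℓ ∈ s.L <;> by_cases he : ℓ ∈ e.L
    · rw [LTS.afterProj_append_lab_of_mem hs, LTS.afterProj_append_lab_of_mem he]
      rcases hxs hs with hout | hins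
      · exact .syncOutS ℓ hX hout (hcomp.mem_I_of_mem_U (LTS.mem_outSet_lab.1 hout).1 he)
      · rcases hxe he with hout | hine
        · exact .syncOutE ℓ hX hout (hcomp.symm.mem_I_of_mem_U (LTS.mem_outSet_lab.1 hout).1 hs)
        · exact .syncIn ℓ hX hins hine
    · rw [LTS.afterProj_append_lab_of_mem hs, LTS.afterProj_append_lab_of_notMem he]
      exact .internalS ℓ hX (hxs hs) he
    · rw [LTS.afterProj_append_lab_of_notMem hs, LTS.afterProj_append_lab_of_mem he]
      exact .internalE ℓ hX (hxe he) hs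
    · exact ((mem_par_L.1 hx).elim hs he).elim

theorem RU_and_afterIsProd_of_mem_Utraces (hcomp : Composable s e) (heco : Eco s e)
    (hσ : σ ∈ (par s e).Utraces) :
    RU s e (s.afterProj σ) (e.afterProj σ) ∧ AfterIsProd s e σ := by
  induction σ using List.reverseRecOn with
  | nil => exact ⟨.base, afterIsProd_nil⟩
  | append_singleton σ x ih =>
    obtain ⟨hσ', hx, -⟩ := LTS.append_singleton_mem_Utraces_iff.1 hσ
    obtain ⟨hX, hprod⟩ := ih hσ'
    have hacc := heco.mutuallyAcceptsOn hX
    obtain ⟨hxs, hxe⟩ := hprod.enables_of_append_mem_Utraces hcomp hacc hσ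
    exact ⟨hX.append_singleton hcomp hx hxs hxe, hprod.append_singleton hcomp hacc hx⟩

theorem append_mem_Utraces_par_of_enables (hs : Disjoint s.I s.U) (he : Disjoint e.I e.U)
    (hcomp : Composable s e) (heco : Eco s e) (hσ : σ ∈ (par s e).Utraces)
    (hx : ELabel.inL (par s e).L x) (hxs : s.Enables (s.afterProj σ) x)
    (hxe : e.Enables (e.afterProj σ) x) : σ ++ [x] ∈ (par s e).Utraces :=
  have ⟨hX, hprod⟩ := RU_and_afterIsProd_of_mem_Utraces hcomp heco hσ
  hprod.append_mem_Utraces hs he hcomp (heco.mutuallyAcceptsOn hX) hσ hx hxs hxe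

theorem afterProj_nonempty_of_mem_Utraces_par (hcomp : Composable s e) (heco : Eco s e)
    (hσ : σ ∈ (par s e).Utraces) : (s.afterProj σ).Nonempty ∧ (e.afterProj σ).Nonempty :=
  (RU_and_afterIsProd_of_mem_Utraces hcomp heco hσ).2.nonempty_of_mem_Utraces hσ

theorem exists_mem_Utraces_par_of_sync (hs : Disjoint s.I s.U) (he : Disjoint e.I e.U)
    (hcomp : Composable s e) (heco : Eco s e) (hσ : σ ∈ (par s e).Utraces)
    (hℓs : .lab ℓ ∈ s.outSet (s.afterProj σ) ∨ ℓ ∈ s.inSet (s.afterProj σ))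
    (hℓe : .lab ℓ ∈ e.outSet (e.afterProj σ) ∨ ℓ ∈ e.inSet (e.afterProj σ)) :
    ∃ ρ ∈ (par s e).Utraces, s.afterSet (s.afterProj σ) [.lab ℓ] = s.afterProj ρ ∧
      e.afterSet (e.afterProj σ) [.lab ℓ] = e.afterProj ρ := by
  obtain ⟨hnes, hnee⟩ := afterProj_nonempty_of_mem_Utraces_par hcomp heco hσ
  have hLs := LTS.mem_L_of_mem_outSet_or_mem_inSet hnes hℓs
  have hLe := LTS.mem_L_of_mem_outSet_or_mem_inSet hnee hℓe
  exact ⟨σ ++ [.lab ℓ], append_mem_Utraces_par_of_enables (x := .lab ℓ) hs he hcomp heco hσ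
    (mem_par_L.2 (.inl hLs)) (LTS.enables_lab_iff.2 fun _ => hℓs)
    (LTS.enables_lab_iff.2 fun _ => hℓe), (LTS.afterProj_append_lab_of_mem hLs).symm,
    (LTS.afterProj_append_lab_of_mem hLe).symm⟩

theorem RU.exists_mem_Utraces (hs : Disjoint s.I s.U) (he : Disjoint e.I e.U)
    (hcomp : Composable s e) (heco : Eco s e) (hX : RU s e Xs Xe) :
    ∃ σ ∈ (par s e).Utraces, Xs = s.afterProj σ ∧ Xe = e.afterProj σ := by
  induction hX with
  | base => exact ⟨[], LTS.nil_mem_Utraces, rfl, rfl⟩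
  | syncOutE ℓ hX hout hI ih =>
    obtain ⟨σ, hσ, rfl, rfl⟩ := ih
    exact exists_mem_Utraces_par_of_sync hs he hcomp heco hσ
      (.inr ((heco.mutuallyAcceptsOn hX).1 ℓ hout hI)) (.inl hout)
  | syncOutS ℓ hX hout hI ih =>
    obtain ⟨σ, hσ, rfl, rfl⟩ := ih
    exact exists_mem_Utraces_par_of_sync hs he hcomp heco hσ (.inl hout)
      (.inr ((heco.mutuallyAcceptsOn hX).2 ℓ hout hI))
  | syncIn ℓ _ hins hine ih =>
    obtain ⟨σ, hσ, rfl, rfl⟩ := ih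
    exact exists_mem_Utraces_par_of_sync hs he hcomp heco hσ (.inr hins) (.inr hine)
  | internalE ℓ _ hℓe hLs ih =>
    obtain ⟨σ, hσ, rfl, rfl⟩ := ih
    have hLe := LTS.mem_L_of_mem_outSet_or_mem_inSet
      (afterProj_nonempty_of_mem_Utraces_par hcomp heco hσ).2 hℓe
    exact ⟨σ ++ [.lab ℓ], append_mem_Utraces_par_of_enables (x := .lab ℓ) hs he hcomp heco hσ
      (mem_par_L.2 (.inr hLe)) (LTS.enables_lab_of_notMem_L hLs)
      (LTS.enables_lab_iff.2 fun _ => hℓe), (LTS.afterProj_append_lab_of_notMem hLs).symm,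
      (LTS.afterProj_append_lab_of_mem hLe).symm⟩
  | internalS ℓ _ hℓs hLe ih =>
    obtain ⟨σ, hσ, rfl, rfl⟩ := ih
    have hLs := LTS.mem_L_of_mem_outSet_or_mem_inSet
      (afterProj_nonempty_of_mem_Utraces_par hcomp heco hσ).1 hℓs
    exact ⟨σ ++ [.lab ℓ], append_mem_Utraces_par_of_enables (x := .lab ℓ) hs he hcomp heco hσ
      (mem_par_L.2 (.inl hLs)) (LTS.enables_lab_iff.2 fun _ => hℓs)
      (LTS.enables_lab_of_notMem_L hLe), (LTS.afterProj_append_lab_of_mem hLs).symm,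
      (LTS.afterProj_append_lab_of_notMem hLe).symm⟩
  | qdelta _ hδs hδe ih =>
    obtain ⟨σ, hσ, rfl, rfl⟩ := ih
    exact ⟨σ ++ [.delta], append_mem_Utraces_par_of_enables (x := .delta) hs he hcomp heco hσ
      trivial (LTS.enables_delta_iff.2 hδs) (LTS.enables_delta_iff.2 hδe),
      LTS.afterProj_append_delta.symm, LTS.afterProj_append_delta.symm⟩

end Parallel

theorem RU_utraces_bi_implication_general {Qs Qe Lab : Type} (s : LTS Qs Lab) (e : LTS Qe Lab)
    (hs : Disjoint s.I s.U) (he : Disjoint e.I e.U) (hcomp : Composable s e) (heco : Eco s e)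
    (qs : Qs) (qe : Qe) :
    (∃ (Xs : Set Qs) (Xe : Set Qe), RU s e Xs Xe ∧ qs ∈ Xs ∧ qe ∈ Xe) ↔
      ∃ σ ∈ (par s e).Utraces, (par s e).W (par s e).q0 σ (qs, qe) := by
  constructor
  · rintro ⟨Xs, Xe, hX, hqs, hqe⟩
    obtain ⟨σ, hσ, rfl, rfl⟩ := hX.exists_mem_Utraces hs he hcomp heco
    exact ⟨σ, hσ, (RU_and_afterIsProd_of_mem_Utraces hcomp heco hσ).2.mem_iff.2 ⟨hqs, hqe⟩⟩
  · rintro ⟨σ, hσ, hw⟩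
    obtain ⟨hX, hprod⟩ := RU_and_afterIsProd_of_mem_Utraces hcomp heco hσ
    exact ⟨s.afterProj σ, e.afterProj σ, hX, hprod.mem_iff.1 hw⟩

/-- for composable `s`, `e` with `s eco e`: `(q_s, q_e)` lies in
some pair of `R_U(s,e)` iff `q_s ∥ q_e` is reachable along some utrace of
`s ∥ e`. -/
theorem RU_utraces_bi_implication {Qs Qe Lab : Type}
    (s : LTS Qs Lab) (e : LTS Qe Lab)
    (hs : s.WellFormed) (he : e.WellFormed)
    (hcomp : Composable s e) (heco : Eco s e)
    (qs : Qs) (qe : Qe) :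
    (∃ (Xs : Set Qs) (Xe : Set Qe), RU s e Xs Xe ∧ qs ∈ Xs ∧ qe ∈ Xe) ↔
      ∃ σ ∈ (par s e).Utraces, (par s e).W (par s e).q0 σ (qs, qe) :=
  RU_utraces_bi_implication_general s e hs.2.2.1 he.2.2.1 hcomp heco qs qe
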